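/- There exists C > 0 such that for every word w with letters in {1,2,3} whose last two letters are different, and for all i ≠ j in {1,2,3}: ‖(A_w e_i) × (A_w e_j)‖ ≤ C · (σ2(A_w)/σ1(A_w)) · ‖A_w e_i‖ · ‖A_w e_j‖, where × is the cross product in ℝ³; equivalently, the projective distance d(A_w E_i, A_w E_j) = ‖A_w e_i × A_w e_j‖/(‖A_w e_i‖·‖A_w e_j‖) is at most C·σ2(A_w)/σ1(A_w), so the projective diameter of the image triangle is O(σ2/σ1). -/

import Mathlib

/-!
Write `g = A_w`, so `det g = 1` and `σ₂(g)/σ₁(g) = ‖g⁻¹‖ / ‖g‖²`. Up to sign the cross product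
of columns `i` and `j` of `g` is the remaining row of `adj g = g⁻¹`, so its norm is at most
`‖g⁻¹‖`. It therefore suffices that every column of `g` has norm comparable to `‖g‖`.

Since the entries are nonnegative, the norm of a column is comparable to its coordinate sum, which
is additive. Right multiplication by `A_a` sends the column sums `(X, Y, Z)` (with `X` in position
`a`) to `(X, X + Y, X + Z)`, and this preserves the three triangle inequalities
(`colSum_triangle`). If the word ends in `ab` with `a ≠ b`, the column sums of `A_w` at `b, a, c`
are `X + Y`, `2X + Y`, `2X + Y + Z` in terms of those of the prefix at `a, b, c`. By the triangle
inequality `Z ≤ X + Y`, so they agree up to a factor `3` (`colSum_comparable`).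
-/

open Matrix MeasureTheory

noncomputable section

abbrev M3 := Matrix (Fin 3) (Fin 3) ℝ
abbrev E3 := EuclideanSpace ℝ (Fin 3)

/-- The Rauzy generators. -/
def A : Fin 3 → M3
  | 0 => !![1,1,1; 0,1,0; 0,0,1]
  | 1 => !![1,0,0; 1,1,1; 0,0,1]
  | 2 => !![1,0,0; 0,1,0; 1,1,1]

/-- Product of the matrices along a word. -/
def Aw (w : List (Fin 3)) : M3 := (w.map A).prod

/-- Euclidean norm of a vector in `ℝ³`. -/
def enorm3 (v : Fin 3 → ℝ) : ℝ := Real.sqrt (v 0 ^ 2 + v 1 ^ 2 + v 2 ^ 2)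

/-- Largest singular value = `ℓ²` operator norm. -/
def sval1 (g : M3) : ℝ := ‖(Matrix.toEuclideanLin g).toContinuousLinearMap‖

/-- Smallest singular value (for invertible `g`): `σ₃(g) = σ₁(g⁻¹)⁻¹`. -/
def sval3 (g : M3) : ℝ := (sval1 g⁻¹)⁻¹

/-- Middle singular value (for invertible `g`): `σ₂ = |det g|·σ₁(g⁻¹)/σ₁(g)`. -/
def sval2 (g : M3) : ℝ := |g.det| * sval1 g⁻¹ / sval1 g

def basis3 (i : Fin 3) : Fin 3 → ℝ := Pi.single i 1

def omega3 (v : Fin 3 → ℝ) : ℝ := v 0 + v 1 + v 2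

def ofE : E3 → (Fin 3 → ℝ) := WithLp.equiv 2 (Fin 3 → ℝ)
def toE : (Fin 3 → ℝ) → E3 := (WithLp.equiv 2 (Fin 3 → ℝ)).symm

/-- The standard 2-simplex in `ℝ³` (with the Euclidean metric). -/
def simplex : Set E3 := {x | (∀ i, 0 ≤ ofE x i) ∧ omega3 (ofE x) = 1}

/-- The projective action of the word `w` on the simplex. -/
def fmap (w : List (Fin 3)) (x : E3) : E3 :=
  toE ((omega3 ((Aw w) *ᵥ ofE x))⁻¹ • ((Aw w) *ᵥ ofE x))

/-- The Rauzy gasket. -/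
def gasket : Set E3 :=
  ⋂ n : ℕ, ⋃ w ∈ {w : List (Fin 3) | w.length = n + 1}, fmap w '' simplex

/-- Falconer's singular value function. -/
def phi (s : ℝ) (g : M3) : ℝ :=
  if s ≤ 1 then (sval2 g / sval1 g) ^ s
  else (sval2 g / sval1 g) * (sval3 g / sval1 g) ^ (s - 1)

/-- The affinity exponent of the Rauzy semigroup. -/
def sA : ℝ :=
  sSup {s : ℝ | s ∈ Set.Ioc (0:ℝ) 2 ∧
    ¬ Summable fun w : {w : List (Fin 3) // w ≠ []} => phi s (Aw w.1)}

/-- A word has its last `k` letters not all the same. -/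
def LastNotAllSame (w : List (Fin 3)) (k : ℕ) : Prop :=
  k ≤ w.length ∧ ¬ ∃ c, ∀ x ∈ w.drop (w.length - k), x = c

/-- A word's last two letters are different. -/
def LastTwoDiff (w : List (Fin 3)) : Prop :=
  ∃ u a b, w = u ++ [a, b] ∧ a ≠ b

/-- The Cartan projection `κ(g) = (log σ₁, log σ₂, log σ₃)`. -/
def kappa (g : M3) : Fin 3 → ℝ :=
  ![Real.log (sval1 g), Real.log (sval2 g), Real.log (sval3 g)]

/-- The linear functional `ψ_s` on the Cartan algebra. -/
def psi (s : ℝ) (lam : Fin 3 → ℝ) : ℝ := (lam 0 - lam 1) + (s - 1) * (lam 0 - lam 2)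

end

/-- Sum of the entries of the `i`-th column of `g`. -/
def colSum (g : M3) (i : Fin 3) : ℝ := g 0 i + g 1 i + g 2 i

lemma det_A (a : Fin 3) : (A a).det = 1 := by
  fin_cases a <;> simp [A, Matrix.det_fin_three]

lemma det_Aw (w : List (Fin 3)) : (Aw w).det = 1 := by
  induction w with
  | nil => simp [Aw]
  | cons a w ih =>
    have h : Aw (a :: w) = A a * Aw w := by simp [Aw]
    rw [h, Matrix.det_mul, det_A, ih, one_mul]

lemma A_nonneg (a i j : Fin 3) : 0 ≤ A a i j := by
  fin_cases a <;> fin_cases i <;> fin_cases j <;> simp [A]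

lemma Aw_nonneg (w : List (Fin 3)) (i j : Fin 3) : 0 ≤ Aw w i j := by
  induction w generalizing i j with
  | nil =>
    simp only [Aw, List.map_nil, List.prod_nil, Matrix.one_apply]
    split_ifs <;> norm_num
  | cons a w ih =>
    have h : Aw (a :: w) = A a * Aw w := by simp [Aw]
    rw [h, Matrix.mul_apply]
    exact Finset.sum_nonneg fun k _ => mul_nonneg (A_nonneg a i k) (ih k j)

lemma colSum_nonneg (w : List (Fin 3)) (i : Fin 3) : 0 ≤ colSum (Aw w) i :=
  add_nonneg (add_nonneg (Aw_nonneg w 0 i) (Aw_nonneg w 1 i)) (Aw_nonneg w 2 i)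

/-- Right multiplication by `A a` adds column `a` to each of the other two columns. -/
lemma colSum_mul_A (g : M3) (a i : Fin 3) :
    colSum (g * A a) i = if i = a then colSum g i else colSum g a + colSum g i := by
  fin_cases a <;> fin_cases i <;>
    simp [colSum, A, Matrix.mul_apply, Fin.sum_univ_three] <;> ring

lemma colSum_triangle (w : List (Fin 3)) :
    colSum (Aw w) 0 ≤ colSum (Aw w) 1 + colSum (Aw w) 2 ∧
    colSum (Aw w) 1 ≤ colSum (Aw w) 0 + colSum (Aw w) 2 ∧
    colSum (Aw w) 2 ≤ colSum (Aw w) 0 + colSum (Aw w) 1 := by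
  induction w using List.reverseRecOn with
  | nil => simp [Aw, colSum]
  | append_singleton w a ih =>
    have h : Aw (w ++ [a]) = Aw w * A a := by simp [Aw]
    have h0 := colSum_nonneg w 0
    have h1 := colSum_nonneg w 1
    have h2 := colSum_nonneg w 2
    obtain ⟨t0, t1, t2⟩ := ih
    simp only [h, colSum_mul_A]
    fin_cases a <;> simp <;> refine ⟨?_, ?_, ?_⟩ <;> linarith

lemma colSum_comparable {w : List (Fin 3)} (hw : LastTwoDiff w) (i j : Fin 3) :
    colSum (Aw w) i ≤ 3 * colSum (Aw w) j := by
  obtain ⟨u, a, b, rfl, hab⟩ := hw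
  have h : Aw (u ++ [a, b]) = Aw u * A a * A b := by simp [Aw, mul_assoc]
  have h0 := colSum_nonneg u 0
  have h1 := colSum_nonneg u 1
  have h2 := colSum_nonneg u 2
  obtain ⟨t0, t1, t2⟩ := colSum_triangle u
  simp only [h, colSum_mul_A]
  fin_cases a <;> fin_cases b <;> first | exact absurd rfl hab | skip
  all_goals fin_cases i <;> fin_cases j <;> simp <;> linarith

lemma enorm3_eq_norm (v : Fin 3 → ℝ) : enorm3 v = ‖WithLp.toLp 2 v‖ := by
  simp [enorm3, EuclideanSpace.norm_eq, Fin.sum_univ_three]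

lemma enorm3_mulVec_le (g : M3) (v : Fin 3 → ℝ) :
    enorm3 (g *ᵥ v) ≤ sval1 g * enorm3 v := by
  rw [enorm3_eq_norm, enorm3_eq_norm]
  exact (Matrix.toEuclideanLin g).toContinuousLinearMap.le_opNorm (WithLp.toLp 2 v)

lemma sval1_nonneg (g : M3) : 0 ≤ sval1 g := norm_nonneg _

/-- A row `r = h k` satisfies `‖r‖² = (h r)_k ≤ ‖h‖ ‖r‖`. -/
lemma enorm3_row_le (h : M3) (k : Fin 3) : enorm3 (h k) ≤ sval1 h := by
  have hsq : enorm3 (h k) ^ 2 = (h *ᵥ h k) k := by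
    rw [enorm3, Real.sq_sqrt (by positivity)]
    simp [Matrix.mulVec, dotProduct, Fin.sum_univ_three]
    ring
  have hk : (h *ᵥ h k) k ≤ enorm3 (h *ᵥ h k) := by
    apply Real.le_sqrt_of_sq_le
    generalize h *ᵥ h k = v
    fin_cases k <;> simp <;> nlinarith [sq_nonneg (v 0), sq_nonneg (v 1), sq_nonneg (v 2)]
  have hle := enorm3_mulVec_le h (h k)
  have h0 : 0 ≤ enorm3 (h k) := Real.sqrt_nonneg _
  rcases h0.eq_or_lt with h0 | h0
  · rw [← h0]; exact sval1_nonneg h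
  · exact le_of_mul_le_mul_right (by nlinarith) h0

lemma mulVec_basis3 (g : M3) (i k : Fin 3) : (g *ᵥ basis3 i) k = g k i := by
  simp [basis3]

/-- When `det g = 1`, the cross product of two columns is, up to sign, a row of `g⁻¹ = adj g`. -/
lemma enorm3_cross_le (g : M3) (hg : g.det = 1) (i j : Fin 3) (hij : i ≠ j) :
    enorm3 (crossProduct (g *ᵥ basis3 i) (g *ᵥ basis3 j)) ≤ sval1 g⁻¹ := by
  have hinv : g⁻¹ = g.adjugate := by simp [Matrix.inv_def, hg]
  obtain ⟨k, hk⟩ : ∃ k, enorm3 (crossProduct (g *ᵥ basis3 i) (g *ᵥ basis3 j))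
      = enorm3 (g.adjugate k) := by
    -- `k = -(i + j)` in `Fin 3` is the index different from both `i` and `j`.
    refine ⟨-(i + j), ?_⟩
    simp only [enorm3, cross_apply, mulVec_basis3, Matrix.adjugate_fin_three]
    congr 1
    fin_cases i <;> fin_cases j <;> first | exact absurd rfl hij | skip
    all_goals simp [Fin.neg_def, Fin.add_def]; ring
  rw [hk, hinv]
  exact enorm3_row_le _ k

lemma enorm3_le_sum (v : Fin 3 → ℝ) (hv : ∀ i, 0 ≤ v i) : enorm3 v ≤ v 0 + v 1 + v 2 := by
  have h0 := hv 0
  have h1 := hv 1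
  have h2 := hv 2
  refine Real.sqrt_le_iff.2 ⟨by positivity, ?_⟩
  nlinarith [mul_nonneg h0 h1, mul_nonneg h0 h2, mul_nonneg h1 h2]

lemma sum_le_enorm3 (v : Fin 3 → ℝ) : v 0 + v 1 + v 2 ≤ 2 * enorm3 v := by
  have h : (v 0 + v 1 + v 2) / 2 ≤ enorm3 v := by
    apply Real.le_sqrt_of_sq_le
    nlinarith [sq_nonneg (v 0 - v 1), sq_nonneg (v 0 - v 2), sq_nonneg (v 1 - v 2),
      sq_nonneg (v 0), sq_nonneg (v 1), sq_nonneg (v 2)]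
  linarith

/-- The operator norm is at most the sum of all entries of a nonnegative matrix. -/
lemma sval1_le_sum (g : M3) (hg : ∀ i j, 0 ≤ g i j) :
    sval1 g ≤ colSum g 0 + colSum g 1 + colSum g 2 := by
  have hc : ∀ j, 0 ≤ colSum g j := fun j => by
    have h0 := hg 0 j
    have h1 := hg 1 j
    have h2 := hg 2 j
    unfold colSum
    positivity
  have hcol : ∀ j, ‖WithLp.toLp 2 (fun k => g k j)‖ ≤ colSum g j := fun j => by
    rw [← enorm3_eq_norm]
    exact enorm3_le_sum _ fun k => hg k j
  refine ContinuousLinearMap.opNorm_le_bound _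
    (add_nonneg (add_nonneg (hc 0) (hc 1)) (hc 2)) fun x => ?_
  have hx : (Matrix.toEuclideanLin g).toContinuousLinearMap x =
      ∑ j, x j • WithLp.toLp 2 (fun k => g k j) := by
    ext k
    simp [Matrix.toEuclideanLin, Matrix.mulVec, dotProduct, Fin.sum_univ_three]
    ring
  rw [hx]
  calc ‖∑ j, x j • WithLp.toLp 2 (fun k => g k j)‖
      ≤ ∑ j, ‖x j • WithLp.toLp 2 (fun k => g k j)‖ := norm_sum_le _ _
    _ ≤ ∑ j, ‖x‖ * colSum g j := by
        refine Finset.sum_le_sum fun j _ => ?_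
        rw [norm_smul]
        exact mul_le_mul (PiLp.norm_apply_le x j) (hcol j) (norm_nonneg _) (norm_nonneg _)
    _ = (colSum g 0 + colSum g 1 + colSum g 2) * ‖x‖ := by
        rw [Fin.sum_univ_three]; ring

lemma sval1_pos (g : M3) (hg : g.det = 1) : 0 < sval1 g := by
  refine (sval1_nonneg g).lt_of_ne' fun h => ?_
  have h0 : g = 0 := by simpa [sval1] using h
  simp [h0, Matrix.det_zero] at hg

/-- Every column of `A_w` realises the operator norm up to the factor `18 = 9 · 2`: the sum of all
entries is at most `9` times any column sum, which is at most `2` times the column norm. -/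
lemma sval1_le_col {w : List (Fin 3)} (hw : LastTwoDiff w) (i : Fin 3) :
    sval1 (Aw w) ≤ 18 * enorm3 (Aw w *ᵥ basis3 i) := by
  have h := sval1_le_sum (Aw w) (Aw_nonneg w)
  have h0 := colSum_comparable hw 0 i
  have h1 := colSum_comparable hw 1 i
  have h2 := colSum_comparable hw 2 i
  have h3 := sum_le_enorm3 (Aw w *ᵥ basis3 i)
  simp only [mulVec_basis3] at h3
  have h4 : colSum (Aw w) i ≤ 2 * enorm3 (Aw w *ᵥ basis3 i) := h3
  linarith

/-- Diameter bound on image triangles: the projective distance between `A_w E_i` and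
`A_w E_j` is `O(σ₂(A_w)/σ₁(A_w))` for words whose last two letters differ. -/
theorem cross_product_diam_bound :
    ∃ C > (0:ℝ), ∀ w : List (Fin 3), LastTwoDiff w →
      ∀ i j : Fin 3, i ≠ j →
        enorm3 (crossProduct (Aw w *ᵥ basis3 i) (Aw w *ᵥ basis3 j)) ≤
          C * (sval2 (Aw w) / sval1 (Aw w)) *
            enorm3 (Aw w *ᵥ basis3 i) * enorm3 (Aw w *ᵥ basis3 j) := by
  refine ⟨18 * 18, by norm_num, fun w hw i j hij => ?_⟩
  have hpos := sval1_pos (Aw w) (det_Aw w)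
  have hinv := sval1_nonneg (Aw w)⁻¹
  have hi := sval1_le_col hw i
  have hj := sval1_le_col hw j
  refine (enorm3_cross_le (Aw w) (det_Aw w) i j hij).trans ?_
  rw [sval2, det_Aw, abs_one, one_mul]
  have hmul := mul_le_mul hi hj hpos.le (hpos.le.trans hi)
  calc sval1 (Aw w)⁻¹
      = sval1 (Aw w)⁻¹ / sval1 (Aw w) / sval1 (Aw w) * (sval1 (Aw w) * sval1 (Aw w)) := by
        field_simp
    _ ≤ sval1 (Aw w)⁻¹ / sval1 (Aw w) / sval1 (Aw w) *
          (18 * enorm3 (Aw w *ᵥ basis3 i) * (18 * enorm3 (Aw w *ᵥ basis3 j))) :=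
        mul_le_mul_of_nonneg_left hmul (by positivity)
    _ = _ := by ring
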